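/- Let Y be a Hausdorff space with a strictly increasing closed cover {B_n}_{n∈ℕ}. A Hausdorff space X is strongly first countable if and only if to each point x ∈ X one can assign a lower semi-continuous set-valued map φ_x : X → F(Y) such that: (G) for every x ∈ X, {x} = ⋂_{n∈ℕ} φ_x^{-1}[Y∖B_n]; (E) for all x, y, z ∈ X, φ_x(y) ⊆ φ_x(z) or φ_y(z) ⊆ φ_x(z); and (b) for every x ∈ X and every closed set F ⊆ X with x ∉ F, there exists n ∈ ℕ with F ⊆ φ_x^#[B_n]. -/

import Mathlib

/-!
Both directions use the dictionary `y ∈ g n x ↔ φ x y ⊈ B n`.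

Given `φ`, put `g n x = {y | φ x y ∩ (B n)ᶜ ≠ ∅}`: lower semi-continuity makes it open, (G) puts `x`
in it, (b) makes these sets a base at `x`, and (E) yields the transitivity
`y ∈ g n x → g n y ⊆ g n x`.

Given `g`, put `φ x y = ⋂ {B n | y ∉ g n x}`, which is all of `Y` when `y = x` and otherwise is
`B m` for the least `m` with `y ∉ g m x`. A point `w` lies in `φ x y` iff `y ∈ g n x` whenever
`w ∉ B n`; only finitely many `n` satisfy `w ∉ B n`, which gives lower semi-continuity.
For (E), if `φ x y ⊈ φ x z`, then `y ∈ g m x` for the least `m` with `z ∉ g m x`, so transitivity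
of `g` gives `z ∉ g m y`, whence `φ y z ⊆ B m = φ x z`.
-/

open Set Filter Topology TopologicalSpace

/-- A strictly increasing closed cover of `Y`. -/
def SICC {Y : Type*} [TopologicalSpace Y] (B : ℕ → Set Y) : Prop :=
  (∀ n, IsClosed (B n)) ∧ (⋃ n, B n) = Set.univ ∧ (B 0).Nonempty ∧ ∀ n, B n ⊂ B (n + 1)

/-- A lower semi-continuous set-valued map with nonempty closed values. -/
def LSCMap {X Y : Type*} [TopologicalSpace X] [TopologicalSpace Y] (φ : X → Set Y) : Prop :=
  (∀ x, (φ x).Nonempty ∧ IsClosed (φ x)) ∧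
    ∀ V : Set Y, IsOpen V → IsOpen {x | (φ x ∩ V).Nonempty}

/-- A g-function for `X`. -/
def IsGFunction {X : Type*} [TopologicalSpace X] (g : ℕ → X → Set X) : Prop :=
  (∀ n x, IsOpen (g n x)) ∧ (∀ n x, x ∈ g n x) ∧ ∀ n x, g (n + 1) x ⊆ g n x

/-- `X` is strongly first countable. -/
def StronglyFirstCountable (X : Type*) [TopologicalSpace X] : Prop :=
  ∃ g : ℕ → X → Set X, IsGFunction g ∧
    (∀ x : X, (𝓝 x).HasBasis (fun _ : ℕ => True) fun n => g n x) ∧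
    ∀ (n : ℕ) (x y : X), y ∈ g n x → g n y ⊆ g n x

/-- The map `(x, y) ↦ ⋂ {B n | y ∉ g n x}` attached to a g-function `g` and a cover `B`. -/
def gMap {X Y : Type*} (B : ℕ → Set Y) (g : ℕ → X → Set X) (x y : X) : Set Y :=
  {w | ∀ n, y ∉ g n x → w ∈ B n}

lemma SICC.monotone {Y : Type*} [TopologicalSpace Y] {B : ℕ → Set Y} (hB : SICC B) :
    Monotone B :=
  monotone_nat_of_le_succ fun n => (hB.2.2.2 n).subset

lemma SICC.exists_notMem {Y : Type*} [TopologicalSpace Y] {B : ℕ → Set Y} (hB : SICC B) (n : ℕ) :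
    ∃ w, w ∉ B n := by
  obtain ⟨w, -, hw⟩ := Set.exists_of_ssubset (hB.2.2.2 n)
  exact ⟨w, hw⟩

lemma gMap_lsc {X Y : Type*} [TopologicalSpace X] [TopologicalSpace Y] {B : ℕ → Set Y}
    (hB : SICC B) {g : ℕ → X → Set X} (hg : ∀ n x, IsOpen (g n x)) (x : X) :
    LSCMap (gMap B g x) := by
  refine ⟨fun y => ⟨?_, ?_⟩, fun V _ => ?_⟩
  · obtain ⟨w, hw⟩ := hB.2.2.1
    exact ⟨w, fun n _ => hB.monotone (Nat.zero_le n) hw⟩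
  · have : gMap B g x y = ⋂ n, ⋂ _ : y ∉ g n x, B n := by
      ext w; simp [gMap]
    rw [this]
    exact isClosed_iInter fun n => isClosed_iInter fun _ => hB.1 n
  · have : {y | (gMap B g x y ∩ V).Nonempty} = ⋃ w ∈ V, ⋂ n ∈ {n | w ∉ B n}, g n x := by
      ext y
      simp only [gMap, Set.Nonempty, mem_inter_iff, mem_ofPred_eq, mem_iUnion, mem_iInter,
        exists_prop]
      refine exists_congr fun w => ?_
      rw [and_comm]
      exact and_congr_right fun _ => forall_congr' fun n => not_imp_comm
    rw [this]
    refine isOpen_biUnion fun w _ => Set.Finite.isOpen_biInter ?_ fun n _ => hg n x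
    obtain ⟨N, hN⟩ : ∃ N, w ∈ B N := mem_iUnion.1 (hB.2.1 ▸ mem_univ w)
    refine (Set.finite_lt_nat N).subset fun n hn => ?_
    by_contra h
    exact hn (hB.monotone (not_lt.1 h) hN)

theorem statement5 {X Y : Type*} [TopologicalSpace X] [T2Space X]
    [TopologicalSpace Y] [T2Space Y] (B : ℕ → Set Y) (hB : SICC B) :
    StronglyFirstCountable X ↔
      ∃ φ : X → X → Set Y,
        (∀ x : X, LSCMap (φ x)) ∧
        (∀ x : X, ({x} : Set X) = ⋂ n, {y | (φ x y ∩ (B n)ᶜ).Nonempty}) ∧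
        (∀ x y z : X, φ x y ⊆ φ x z ∨ φ y z ⊆ φ x z) ∧
        (∀ (x : X) (F : Set X), IsClosed F → x ∉ F →
          ∃ n : ℕ, F ⊆ {y | φ x y ⊆ B n}) := by
  constructor
  · rintro ⟨g, ⟨hopen, hmem, -⟩, hbasis, htrans⟩
    refine ⟨gMap B g, gMap_lsc hB hopen, fun x => ?_, fun x y z => ?_, fun x F hF hx => ?_⟩
    · ext y
      simp only [mem_singleton_iff, mem_iInter, mem_ofPred_eq]
      constructor
      · rintro rfl n
        obtain ⟨w, hw⟩ := hB.exists_notMem n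
        exact ⟨w, fun m hm => absurd (hmem m y) hm, hw⟩
      · intro h
        by_contra hne
        obtain ⟨n, -, hn⟩ := (hbasis x).mem_iff.1 (isOpen_ne.mem_nhds (Ne.symm hne))
        obtain ⟨w, hw, hwn⟩ := h n
        exact hwn (hw n fun hy => hn hy rfl)
    · refine or_iff_not_imp_left.2 fun h u hu m hm => ?_
      obtain ⟨w, hw, hwz⟩ := Set.not_subset.1 h
      obtain ⟨n, hzn, hwn⟩ : ∃ n, z ∉ g n x ∧ w ∉ B n := by
        simpa [gMap] using hwz
      -- Up to index `n` the point `w` still avoids `B k`, which forces `y ∈ g k x`.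
      have key : ∀ k ≤ n, z ∉ g k x → u ∈ B k := fun k hk hz => by
        have hy : y ∈ g k x := by
          by_contra hy
          exact hwn (hB.monotone hk (hw k hy))
        exact hu k fun hzk => hz (htrans k x y hy hzk)
      rcases le_total m n with hmn | hmn
      · exact key m hmn hm
      · exact hB.monotone hmn (key n le_rfl hzn)
    · obtain ⟨n, -, hn⟩ := (hbasis x).mem_iff.1 (hF.isOpen_compl.mem_nhds hx)
      exact ⟨n, fun y hy w hw => hw n fun hyn => hn hyn hy⟩
  · rintro ⟨φ, hlsc, hG, hE, hb⟩
    have hopen : ∀ n x, IsOpen {y | (φ x y ∩ (B n)ᶜ).Nonempty} := fun n x =>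
      (hlsc x).2 _ (hB.1 n).isOpen_compl
    have hmem : ∀ n x, x ∈ {y | (φ x y ∩ (B n)ᶜ).Nonempty} := fun n x =>
      mem_iInter.1 (hG x ▸ mem_singleton x) n
    refine ⟨fun n x => {y | (φ x y ∩ (B n)ᶜ).Nonempty}, ⟨hopen, hmem, ?_⟩, fun x => ?_, ?_⟩
    · rintro n x y ⟨w, hw, hwn⟩
      exact ⟨w, hw, fun h => hwn (hB.monotone n.le_succ h)⟩
    · refine ⟨fun U => ⟨fun hU => ?_, ?_⟩⟩
      · obtain ⟨V, hVU, hV, hxV⟩ := mem_nhds_iff.1 hU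
        obtain ⟨n, hn⟩ := hb x Vᶜ hV.isClosed_compl (fun h => h hxV)
        refine ⟨n, trivial, ?_⟩
        rintro y ⟨w, hw, hwn⟩
        by_contra hy
        exact hwn (hn (fun h => hy (hVU h)) hw)
      · rintro ⟨n, -, hn⟩
        exact mem_of_superset ((hopen n x).mem_nhds (hmem n x)) hn
    · rintro n x y ⟨w, hw, hwn⟩ z ⟨v, hv, hvn⟩
      rcases hE x y z with h | h
      · exact ⟨w, h hw, hwn⟩
      · exact ⟨v, h hv, hvn⟩
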